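/- Let D be a central division algebra of index k over a number field F, let Λ be a maximal O_F-order in D, and consider the Hey zeta function ζ_Λ(s) = Σ_{I} 1/[Λ:I]^s over right ideals I of Λ. Then for s ≥ 1 there exist constants N, T independent of M such that the truncated sum Σ_{I : [Λ:I] ≤ M} 1/[Λ:I]^s ≤ N·(log M)^T. -/

import Mathlib

section HeyAux

theorem hey_exists_root (d : ℕ) (hd : d ≠ 0) (n : ℕ) : ∃ B : ℕ, B ^ d ≤ n ∧ n < (B + 1) ^ d := by
  have hex : ∃ B : ℕ, n < (B + 1) ^ d :=
    ⟨n, lt_of_lt_of_le (Nat.lt_succ_self n) (Nat.le_self_pow hd _)⟩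
  classical
  refine ⟨Nat.find hex, ?_, Nat.find_spec hex⟩
  rcases Nat.eq_zero_or_pos (Nat.find hex) with h | h
  · rw [h, zero_pow hd]; exact Nat.zero_le _
  · have := Nat.find_min hex (Nat.sub_lt h Nat.one_pos)
    rw [Nat.sub_add_cancel h] at this
    exact not_lt.mp this

variable {R : Type} [Ring R] [CharZero R] [NoZeroDivisors R]
  {ι : Type} [Fintype ι] [DecidableEq ι]

theorem hey_index (b : Module.Basis ι ℤ R) (x : R) (hx : x ≠ 0) :
    (AddMonoidHom.mulLeft x).range.index = (Algebra.leftMulMatrix b x).det.natAbs ∧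
      (Algebra.leftMulMatrix b x).det ≠ 0 := by
  have hinj : Function.Injective (AddMonoidHom.mulLeft x) := fun a c h => mul_left_cancel₀ hx h
  constructor
  · let e : R ≃ₗ[ℤ] (AddMonoidHom.mulLeft x).range :=
      (AddMonoidHom.ofInjective hinj).toIntLinearEquiv
    rw [AddSubgroup.index_eq_natAbs_det b _ (b.map e), Module.Basis.det_apply]
    congr 2
    ext i j
    rw [Algebra.leftMulMatrix_eq_repr_mul]
    rfl
  · intro h0
    obtain ⟨v, hv, hv0⟩ := Matrix.exists_mulVec_eq_zero_iff.mpr h0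
    apply hv
    have h1 := Algebra.leftMulMatrix_mulVec_repr b x (b.equivFun.symm v)
    have h2 : (b.repr (b.equivFun.symm v) : ι → ℤ) = v := b.equivFun.apply_symm_apply v
    rw [h2, hv0] at h1
    have h3 : x * b.equivFun.symm v = 0 := by
      apply b.repr.injective
      ext i
      rw [← h1]; simp
    have h4 := (mul_eq_zero.mp h3).resolve_left hx
    exact (LinearEquiv.map_eq_zero_iff _).mp h4

theorem hey_det_bound (b : Module.Basis ι ℤ R) : ∃ C : ℕ, ∀ (x : R) (B : ℕ),
    (∀ i, |b.repr x i| ≤ (B : ℤ)) →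
    (Algebra.leftMulMatrix b x).det.natAbs ≤ C * B ^ Fintype.card ι := by
  let A : ℕ := ∑ l, ∑ j, ∑ i, (b.repr (b l * b j) i).natAbs
  have hA : ∀ l j i, |b.repr (b l * b j) i| ≤ (A : ℤ) := by
    intro l j i
    rw [Int.abs_eq_natAbs]
    norm_cast
    calc _ ≤ ∑ i, (b.repr (b l * b j) i).natAbs :=
          Finset.single_le_sum (f := fun i => (b.repr (b l * b j) i).natAbs)
            (fun _ _ => Nat.zero_le _) (Finset.mem_univ i)
      _ ≤ ∑ j, ∑ i, (b.repr (b l * b j) i).natAbs :=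
          Finset.single_le_sum (f := fun j => ∑ i, (b.repr (b l * b j) i).natAbs)
            (fun _ _ => Nat.zero_le _) (Finset.mem_univ j)
      _ ≤ A := Finset.single_le_sum (f := fun l => ∑ j, ∑ i, (b.repr (b l * b j) i).natAbs)
            (fun _ _ => Nat.zero_le _) (Finset.mem_univ l)
  refine ⟨(Fintype.card ι).factorial * (Fintype.card ι * A) ^ Fintype.card ι, fun x B hB => ?_⟩
  have key : ∀ i j, |Algebra.leftMulMatrix b x i j| ≤ (Fintype.card ι * A * B : ℤ) := by
    intro i j
    rw [Algebra.leftMulMatrix_eq_repr_mul]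
    have : b.repr (x * b j) i = ∑ l, b.repr x l * b.repr (b l * b j) i := by
      conv_lhs => rw [← b.sum_repr x, Finset.sum_mul]
      simp only [map_sum, Finsupp.finsetSum_apply, smul_mul_assoc, map_smul, Finsupp.smul_apply,
        smul_eq_mul]
    rw [this]
    calc _ ≤ ∑ l, |b.repr x l * b.repr (b l * b j) i| := Finset.abs_sum_le_sum_abs _ _
      _ ≤ ∑ l : ι, (B * A : ℤ) := by
          refine Finset.sum_le_sum fun l _ => ?_
          rw [abs_mul]
          exact mul_le_mul (hB l) (hA l j i) (abs_nonneg _) (by positivity)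
      _ = _ := by simp; ring
  have h := Matrix.det_le (abv := AbsoluteValue.abs) key
  simp only [AbsoluteValue.abs_apply, nsmul_eq_mul] at h
  rw [Int.abs_eq_natAbs] at h
  have h' : (Algebra.leftMulMatrix b x).det.natAbs ≤
    (Fintype.card ι).factorial * (Fintype.card ι * A * B) ^ Fintype.card ι := by exact_mod_cast h
  rw [mul_pow _ B, ← mul_assoc] at h'
  exact h'

theorem hey_pigeon (b : Module.Basis ι ℤ R) (I : AddSubgroup R) (hI : 0 < I.index) (B : ℕ)
    (hB : I.index < (B + 1) ^ Fintype.card ι) :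
    ∃ x ∈ I, x ≠ 0 ∧ ∀ i, |b.repr x i| ≤ (B : ℤ) := by
  have hfi : I.FiniteIndex := ⟨hI.ne'⟩
  have : Fintype (R ⧸ I) := Fintype.ofFinite _
  let f : (ι → Fin (B + 1)) → R ⧸ I :=
    fun v => QuotientAddGroup.mk (b.equivFun.symm (fun i => ((v i : ℕ) : ℤ)))
  have hc : Fintype.card (R ⧸ I) < Fintype.card (ι → Fin (B + 1)) := by
    rw [← Nat.card_eq_fintype_card, ← AddSubgroup.index_eq_card]
    simpa using hB
  obtain ⟨v, w, hvw, hf⟩ := Fintype.exists_ne_map_eq_of_card_lt f hc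
  have hmem := (QuotientAddGroup.eq).mp hf
  rw [neg_add_eq_sub, ← map_sub] at hmem
  refine ⟨_, hmem, ?_, ?_⟩
  · intro h0
    rw [LinearEquiv.map_eq_zero_iff, sub_eq_zero] at h0
    apply hvw
    ext i
    have := congrFun h0 i
    omega
  · intro i
    have h2 : ∀ u : ι → ℤ, b.repr (b.equivFun.symm u) i = u i :=
      fun u => congrFun (b.equivFun.apply_symm_apply u) i
    rw [h2, abs_le]
    have h3 := (v i).2
    have h4 := (w i).2
    simp only [Pi.sub_apply]
    omega

theorem hey_count [Module.Finite ℤ R] : ∃ c : ℕ, ∀ (M : ℕ), 1 ≤ M → ∀ S : Finset (Submodule Rᵐᵒᵖ R),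
    (∀ I ∈ S, 0 < (Submodule.toAddSubgroup I).index ∧ (Submodule.toAddSubgroup I).index ≤ M) →
    S.card ≤ c * M := by
  classical
  let ι := Module.Free.ChooseBasisIndex ℤ R
  let b : Module.Basis ι ℤ R := Module.Free.chooseBasis ℤ R
  set d := Fintype.card ι with hd
  have hd0 : d ≠ 0 := by
    intro h
    have : IsEmpty ι := Fintype.card_eq_zero_iff.mp h
    have : Subsingleton R := b.repr.toEquiv.subsingleton
    exact one_ne_zero (Subsingleton.elim (1 : R) 0)
  obtain ⟨C, hC⟩ := hey_det_bound b
  let m := C.factorial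
  have hm : m ≠ 0 := Nat.factorial_ne_zero C
  have hmR : (m : R) ≠ 0 := by exact_mod_cast hm
  -- the finite set of possible K
  let P : AddSubgroup R := (AddMonoidHom.mulLeft (m : R)).range
  have hP : P.FiniteIndex := by
    obtain ⟨h1, h2⟩ := hey_index b (m : R) hmR
    exact ⟨by rw [h1]; simpa using h2⟩
  have hfinQ : Finite (R ⧸ P) := inferInstance
  have hfin : Finite {K : AddSubgroup R // P ≤ K} := by
    refine Finite.of_injective (β := Set (R ⧸ P))
      (fun K => (QuotientAddGroup.mk : R → R ⧸ P) '' (K.1 : Set R)) ?_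
    have aux : ∀ K : {K : AddSubgroup R // P ≤ K},
        (QuotientAddGroup.mk : R → R ⧸ P) ⁻¹' ((QuotientAddGroup.mk : R → R ⧸ P) '' (K.1 : Set R))
          = K.1 := by
      intro K
      ext y
      constructor
      · rintro ⟨z, hz, hzy⟩
        have := K.1.add_mem hz (K.2 (QuotientAddGroup.eq.mp hzy))
        simpa using this
      · intro hy
        exact ⟨y, hy, rfl⟩
    intro K K' h
    apply Subtype.ext
    apply SetLike.coe_injective
    rw [← aux K, ← aux K']
    simp only at h
    rw [h]
  have := Fintype.ofFinite {K : AddSubgroup R // P ≤ K}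
  set κ := Fintype.card {K : AddSubgroup R // P ≤ K} with hκ
  refine ⟨3 ^ d * κ, fun M hM S hS => ?_⟩
  obtain ⟨BM, hBM1, hBM2⟩ := hey_exists_root d hd0 M
  -- choose x
  have hx : ∀ I ∈ S, ∃ x ∈ I, x ≠ 0 ∧ (∀ i, |b.repr x i| ≤ (BM : ℤ)) ∧
      ∀ y ∈ I, ∃ z, (m : R) * y = x * z := by
    intro I hI
    obtain ⟨hI0, hIM⟩ := hS I hI
    obtain ⟨B, hB1, hB2⟩ := hey_exists_root d hd0 (Submodule.toAddSubgroup I).index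
    obtain ⟨x, hxI, hx0, hxB⟩ := hey_pigeon b (Submodule.toAddSubgroup I) hI0 B hB2
    have hBB : B ≤ BM := by
      have : B < BM + 1 := lt_of_pow_lt_pow_left₀ d (Nat.zero_le _)
        (lt_of_le_of_lt (hB1.trans hIM) hBM2)
      omega
    refine ⟨x, hxI, hx0, fun i => (hxB i).trans (by exact_mod_cast hBB), fun y hy => ?_⟩
    obtain ⟨h1, h2⟩ := hey_index b x hx0
    have hle : (AddMonoidHom.mulLeft x).range ≤ Submodule.toAddSubgroup I := by
      rintro _ ⟨z, rfl⟩
      exact I.smul_mem (MulOpposite.op z) hxI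
    have hmul := AddSubgroup.relIndex_mul_index hle
    set r := (AddMonoidHom.mulLeft x).range.relIndex (Submodule.toAddSubgroup I) with hr
    have hidx : (AddMonoidHom.mulLeft x).range.index ≤ C * (Submodule.toAddSubgroup I).index := by
      rw [h1]
      exact (hC x B hxB).trans (Nat.mul_le_mul_left _ hB1)
    have hrC : r ≤ C := by
      rw [← hmul] at hidx
      exact Nat.le_of_mul_le_mul_right hidx hI0
    have hr0 : 0 < r := by
      rcases Nat.eq_zero_or_pos r with h | h
      · rw [h, zero_mul, h1] at hmul
        exact absurd (Int.natAbs_eq_zero.mp hmul.symm) h2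
      · exact h
    obtain ⟨t, ht⟩ := Nat.dvd_factorial hr0 hrC
    have hry := AddSubgroup.nsmul_index_mem
      ((AddMonoidHom.mulLeft x).range.addSubgroupOf (Submodule.toAddSubgroup I)) ⟨y, hy⟩
    rw [AddSubgroup.mem_addSubgroupOf] at hry
    obtain ⟨z, hz⟩ := hry
    have hz' : x * z = r • y := hz
    refine ⟨z * t, ?_⟩
    rw [← mul_assoc, hz']
    simp only [m, ht]
    push_cast
    rw [nsmul_eq_mul, mul_assoc, mul_assoc, (Nat.cast_commute t y).eq]
  choose! x hxI hx0 hxB hxm using hx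
  let Kf : Submodule Rᵐᵒᵖ R → AddSubgroup R := fun I =>
    ((Submodule.toAddSubgroup I).map (AddMonoidHom.mulLeft (m : R))).comap
      (AddMonoidHom.mulLeft (x I))
  have hKP : ∀ I ∈ S, P ≤ Kf I := by
    rintro I hI _ ⟨z, rfl⟩
    refine ⟨x I * z, I.smul_mem (MulOpposite.op z) (hxI I hI), ?_⟩
    change (m : R) * (x I * z) = x I * ((m : R) * z)
    rw [← mul_assoc, ← mul_assoc, (Nat.cast_commute m (x I)).eq]
  let T : Finset ((ι → ℤ) × AddSubgroup R) :=
    (Fintype.piFinset fun _ : ι => Finset.Icc (-(BM : ℤ)) BM) ×ˢ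
      (Finset.univ : Finset {K : AddSubgroup R // P ≤ K}).image Subtype.val
  have hST : S.card ≤ T.card := by
    refine Finset.card_le_card_of_injOn (fun I => (b.equivFun (x I), Kf I)) ?_ ?_
    · intro I hI
      simp only [T, Finset.coe_product, Set.mem_prod, Finset.mem_coe, Fintype.mem_piFinset,
        Finset.mem_Icc, Finset.mem_image, Finset.mem_univ, true_and]
      exact ⟨fun i => abs_le.mp (hxB I hI i), ⟨Kf I, hKP I hI⟩, rfl⟩
    · intro I hI J hJ hIJ
      simp only [Prod.mk.injEq] at hIJ
      obtain ⟨h1, h2⟩ := hIJ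
      have h1' := b.equivFun.injective h1
      have hrec : ∀ I ∈ S, ∀ y, y ∈ I ↔ ∃ z ∈ Kf I, (m : R) * y = x I * z := by
        intro I hI y
        constructor
        · intro hy
          obtain ⟨z, hz⟩ := hxm I hI y hy
          exact ⟨z, ⟨y, hy, hz⟩, hz⟩
        · rintro ⟨z, ⟨y', hy', hz'⟩, hz⟩
          have h5 : (m : R) * y' = (m : R) * y := by
            rw [hz]; exact hz'
          rw [← mul_left_cancel₀ hmR h5]
          exact hy'
      ext y
      rw [hrec I hI y, hrec J hJ y, h1', h2]
  have hTc : T.card ≤ (2 * BM + 1) ^ d * κ := by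
    rw [Finset.card_product]
    refine Nat.mul_le_mul ?_ Finset.card_image_le
    rw [Fintype.card_piFinset]
    simp only [Int.card_Icc, Finset.prod_const, Finset.card_univ]
    apply le_of_eq
    rw [← hd]
    congr 1
    omega
  have hBM0 : 1 ≤ BM := by
    by_contra h
    have : BM = 0 := by omega
    subst this
    simp at hBM2
    omega
  calc S.card ≤ (2 * BM + 1) ^ d * κ := hST.trans hTc
    _ ≤ (3 * BM) ^ d * κ := by gcongr; omega
    _ = 3 ^ d * κ * BM ^ d := by rw [mul_pow]; ring
    _ ≤ 3 ^ d * κ * M := by gcongr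

end HeyAux

/-- Let `D` be a central division algebra of index `k` over a number field `F` (so
`dim_F D = k²` and the center of `D` is `F`), and let `Λ` be a maximal order in `D`.
Then for any real `s ≥ 1` the truncated Hey zeta sum over finite-index right ideals `I` of
`Λ` with `[Λ:I] ≤ M` is bounded by `N·(log M)^T` for constants `N, T` independent of `M`. -/
theorem truncated_hey_zeta_bound (F : Type) [Field F] [NumberField F]
    (D : Type) [DivisionRing D] [Algebra F D] [FiniteDimensional F D]
    (k : ℕ) (hk : 0 < k) (hdim : Module.finrank F D = k ^ 2)
    (hcentral : Subalgebra.center F D = ⊥)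
    (Λ : Subring D) (hfg : Module.Finite ℤ ↥Λ)
    (hspan : Submodule.span F (Λ : Set D) = ⊤)
    (hmax : ∀ Λ' : Subring D, Module.Finite ℤ ↥Λ' →
      Submodule.span F ((Λ' : Set D)) = ⊤ → Λ ≤ Λ' → Λ' = Λ)
    (s : ℝ) (hs : 1 ≤ s) :
    ∃ N T : ℝ, ∀ M : ℝ, 2 ≤ M → ∀ S : Finset (Submodule (↥Λ)ᵐᵒᵖ ↥Λ),
      (∀ I ∈ S, 0 < (Submodule.toAddSubgroup I).index ∧
        ((Submodule.toAddSubgroup I).index : ℝ) ≤ M) →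
      ∑ I ∈ S, 1 / ((Submodule.toAddSubgroup I).index : ℝ) ^ s
        ≤ N * Real.log M ^ T := by
  have : CharZero F := inferInstance
  have : CharZero D := charZero_of_injective_algebraMap (algebraMap F D).injective
  have : CharZero (↥Λ) := ⟨fun a b h => by
    have := congrArg (Subtype.val) h
    exact_mod_cast this⟩
  obtain ⟨c, hc⟩ := hey_count (R := ↥Λ)
  refine ⟨4 * c / Real.log 2, 1, fun M hM S hS => ?_⟩
  classical
  set n : Submodule (↥Λ)ᵐᵒᵖ ↥Λ → ℕ := fun I => (Submodule.toAddSubgroup I).index with hn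
  have hl2 : 0 < Real.log 2 := Real.log_pos (by norm_num)
  have hlM : Real.log 2 ≤ Real.log M := Real.log_le_log (by norm_num) hM
  have hM0 : (0 : ℝ) < M := by linarith
  set L : ℕ := Nat.log 2 ⌊M⌋₊ with hL
  have hmaps : ∀ I ∈ S, Nat.log 2 (n I) ∈ Finset.range (L + 1) := by
    intro I hI
    rw [Finset.mem_range, Nat.lt_succ_iff]
    exact Nat.log_mono_right (Nat.le_floor (hS I hI).2)
  have hfib : ∀ j ∈ Finset.range (L + 1),
      ∑ I ∈ S with Nat.log 2 (n I) = j, 1 / (n I : ℝ) ^ s ≤ 2 * c := by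
    intro j _
    have hcard : (S.filter fun I => Nat.log 2 (n I) = j).card ≤ c * 2 ^ (j + 1) := by
      apply hc _ Nat.one_le_two_pow
      intro I hI
      rw [Finset.mem_filter] at hI
      refine ⟨(hS I hI.1).1, ?_⟩
      rw [← hI.2]
      exact (Nat.lt_pow_succ_log_self (by norm_num) _).le
    have hterm : ∀ I ∈ S.filter fun I => Nat.log 2 (n I) = j,
        1 / (n I : ℝ) ^ s ≤ 1 / 2 ^ j := by
      intro I hI
      rw [Finset.mem_filter] at hI
      have h0 : 0 < n I := (hS I hI.1).1
      have h1 : (1 : ℝ) ≤ n I := by exact_mod_cast h0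
      have h2 : (2 : ℝ) ^ j ≤ n I := by
        rw [← hI.2]
        exact_mod_cast Nat.pow_log_le_self 2 h0.ne'
      have h3 : (n I : ℝ) ≤ (n I : ℝ) ^ s := by
        simpa using Real.rpow_le_rpow_of_exponent_le h1 hs
      exact one_div_le_one_div_of_le (by positivity) (h2.trans h3)
    calc _ ≤ _ := Finset.sum_le_card_nsmul _ _ _ hterm
      _ = ((S.filter fun I => Nat.log 2 (n I) = j).card : ℝ) * (1 / 2 ^ j) := by
          rw [nsmul_eq_mul]
      _ ≤ (c * 2 ^ (j + 1) : ℝ) * (1 / 2 ^ j) := by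
          gcongr
          exact_mod_cast hcard
      _ = 2 * c := by
          field_simp
          ring
  have hLb : (L : ℝ) * Real.log 2 ≤ Real.log M := by
    rw [← Real.log_pow]
    apply Real.log_le_log (by positivity)
    have hf : ⌊M⌋₊ ≠ 0 := by
      have : 0 < ⌊M⌋₊ := Nat.floor_pos.mpr (by linarith)
      exact this.ne'
    have h1 : (2 : ℝ) ^ L ≤ (⌊M⌋₊ : ℝ) := by
      exact_mod_cast Nat.pow_log_le_self 2 hf
    exact h1.trans (Nat.floor_le hM0.le)
  rw [Real.rpow_one]
  calc ∑ I ∈ S, 1 / (n I : ℝ) ^ s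
      = ∑ j ∈ Finset.range (L + 1), ∑ I ∈ S with Nat.log 2 (n I) = j, 1 / (n I : ℝ) ^ s :=
        (Finset.sum_fiberwise_of_maps_to hmaps _).symm
    _ ≤ ∑ j ∈ Finset.range (L + 1), (2 * c : ℝ) := Finset.sum_le_sum hfib
    _ = 2 * c * (L + 1) := by simp; ring
    _ ≤ 2 * c * (2 * Real.log M / Real.log 2) := by
        gcongr
        rw [le_div_iff₀ hl2]
        linarith
    _ = 4 * c / Real.log 2 * Real.log M := by ring
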